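/- Cauchy-type coefficient estimate (Theorem 5.4): For $\delta>0$ let $\Omega(\delta,\infty):=\{w\in\mathbb C:\operatorname{Re} w<\log\delta\}$, the logarithm of the punctured disc of radius $\delta$ in the logarithmic cover of $\mathbb C\setminus\{0\}$ (so $w=\log z$ and $z^\alpha=e^{\alpha w}$). Let $X$ be a complex Banach space. A generalized power series with coefficients in $X$ is a family $(a_\alpha)_{\alpha\in S}$ in $X$ indexed by a countable well-ordered set $S\subset[0,\infty)$; it converges normally on $\Omega(\delta,\infty)$ if $\sum_{\alpha\in S}\|a_\alpha\|\delta^\alpha<\infty$. Let $\hat R>0$, $\varepsilon>0$, and let $f:\Omega(\hat R+\varepsilon,\infty)\to X$ be holomorphic and bounded. Assume $f$ is $z$-Hahn holomorphic, i.e. there are $\delta_0\in(0,\hat R+\varepsilon]$ and a generalized power series $(a_\alpha)_{\alpha\in S}$ converging normally on $\Omega(\delta_0,\infty)$ such that $f(w)=\sum_{\alpha\in S}a_\alpha e^{\alpha w}$ for all $w\in\Omega(\delta_0,\infty)$ (no normal convergence on $\Omega(\hat R,\infty)$ is assumed). Then for every $R$ with $0<R<\hat R$ one has, in $[0,\infty]$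 with $0\cdot\infty=0$, $$\sum_{\alpha\in S}\|a_\alpha\|R^\alpha\le\Big(\sup_{\operatorname{Re} w=\log\hat R}\|f(w)\|\Big)\cdot\sum_{\alpha\in S}(R/\hat R)^\alpha .$$ In particular, if $\sum_{\alpha\in S}(R/\hat R)^\alpha<\infty$ then the series converges normally on $\Omega(R,\infty)$. -/

import Mathlib

/-- The logarithm of the punctured disc of radius `δ` and half-opening angle `σ`
on the logarithmic cover of `ℂ \ {0}`; for `σ = ⊤` it is the half-plane `Re w < log δ`. -/
def Omega (δ : ℝ) (σ : ENNReal) : Set ℂ :=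
  {w : ℂ | w.re < Real.log δ ∧ ENNReal.ofReal |w.im| < σ}

/-- A generalized power series with coefficients in `X`: a family in `X` indexed by a countable
well-ordered set of non-negative reals. -/
structure GenPowerSeries (X : Type*) where
  exponents : Set ℝ
  countable : exponents.Countable
  isWF : exponents.IsWF
  nonneg : ∀ α ∈ exponents, 0 ≤ α
  coeff : exponents → X

namespace GenPowerSeries

/-- Normal convergence on the punctured disc of radius `δ` (for every half-opening angle):
the supremum of `‖exp (α * w)‖` over `Omega δ σ` is `δ ^ α`. -/
def ConvergesNormally {X : Type*} [NormedAddCommGroup X] (p : GenPowerSeries X) (δ : ℝ) : Prop :=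
  Summable fun α : p.exponents => ‖p.coeff α‖ * δ ^ (α : ℝ)

/-- `p` is the expansion at `z = 0` (that is, as `Re w → -∞`) of `f`, a function of `w = log z`:
on some punctured disc `p` converges normally and its sum is `f`. -/
def IsExpansionOf {X : Type*} [NormedAddCommGroup X] [NormedSpace ℂ X]
    (p : GenPowerSeries X) (f : ℂ → X) : Prop :=
  ∃ δ₀ : ℝ, 0 < δ₀ ∧ p.ConvergesNormally δ₀ ∧
    ∀ w ∈ Omega δ₀ ⊤,
      HasSum (fun α : p.exponents => Complex.exp (((α : ℝ) : ℂ) * w) • p.coeff α) (f w)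

end GenPowerSeries

/-!
On a line `Re w = x₀` far to the left, where the series converges absolutely, `a_α` is the mean
value in the imaginary direction of `e^{-αw} f(w)` (Bohr's formula). Since `e^{-αw} f(w)` is
bounded on vertical strips, Cauchy's theorem on the rectangles `[x₀, log Rhat] × [-T, T]` shows
that this mean value is the same on `Re w = log Rhat`: the horizontal sides contribute `O(1/T)`.
Hence `‖a_α‖ Rhat^α ≤ sup ‖f‖` over that line, and one multiplies by `(R/Rhat)^α` and sums.
-/

open Complex (I)
open Filter Set Topology

section IntervalAverage

variable {E : Type*} [NormedAddCommGroup E] [NormedSpace ℝ E]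

theorem norm_intervalAverage_le_of_norm_le_const {F : ℝ → E} {a b C : ℝ}
    (hF : ∀ y ∈ uIcc a b, ‖F y‖ ≤ C) : ‖⨍ y in a..b, F y‖ ≤ C := by
  have hC : 0 ≤ C := (norm_nonneg _).trans (hF a left_mem_uIcc)
  rw [interval_average_eq, norm_smul, norm_inv, Real.norm_eq_abs]
  calc |b - a|⁻¹ * ‖∫ y in a..b, F y‖
      ≤ |b - a|⁻¹ * (C * |b - a|) := by
        gcongr
        exact intervalIntegral.norm_integral_le_of_norm_le_const fun y hy =>
          hF y (uIoc_subset_uIcc hy)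
    _ = C * (|b - a|⁻¹ * |b - a|) := by ring
    _ ≤ C := mul_le_of_le_one_right hC inv_mul_le_one

theorem hasSum_intervalAverage_of_norm_le {ι : Type*} [Countable ι] {F : ι → ℝ → E} {f : ℝ → E}
    {u : ι → ℝ} (hu : Summable u) (hF : ∀ i, Continuous (F i)) (hFu : ∀ i y, ‖F i y‖ ≤ u i)
    (hf : ∀ y, HasSum (F · y) (f y)) (a b : ℝ) :
    HasSum (fun i => ⨍ y in a..b, F i y) (⨍ y in a..b, f y) := by
  simp only [interval_average_eq]
  refine HasSum.const_smul _ ?_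
  exact intervalIntegral.hasSum_integral_of_dominated_convergence (fun i _ => u i)
    (fun i => (hF i).aestronglyMeasurable) (fun i => .of_forall fun y _ => hFu i y)
    (.of_forall fun _ _ => hu) intervalIntegrable_const (.of_forall fun y _ => hf y)

theorem tendsto_intervalAverage_of_hasSum [CompleteSpace E] {ι : Type*} [Countable ι]
    {F : ι → ℝ → E} {f : ℝ → E} {u : ι → ℝ} {m : ι → E} (hu : Summable u)
    (hF : ∀ i, Continuous (F i)) (hFu : ∀ i y, ‖F i y‖ ≤ u i) (hf : ∀ y, HasSum (F · y) (f y))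
    (hm : ∀ i, Tendsto (fun T => ⨍ y in (-T)..T, F i y) atTop (𝓝 (m i))) :
    Tendsto (fun T => ⨍ y in (-T)..T, f y) atTop (𝓝 (∑' i, m i)) := by
  simp only [← fun T => (hasSum_intervalAverage_of_norm_le hu hF hFu hf (-T) T).tsum_eq]
  exact tendsto_tsum_of_dominated_convergence hu hm <|
    .of_forall fun T i => norm_intervalAverage_le_of_norm_le_const fun y _ => hFu i y

theorem tendsto_inv_sub_neg_smul_of_norm_le {F : ℝ → E} {C : ℝ} (hF : ∀ T, ‖F T‖ ≤ C) :
    Tendsto (fun T : ℝ => (T - -T)⁻¹ • F T) atTop (𝓝 0) := by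
  have hlength : Tendsto (fun T : ℝ => T - -T) atTop atTop := by
    simpa only [sub_neg_eq_add, id] using tendsto_id.atTop_add_atTop tendsto_id
  exact hlength.inv_tendsto_atTop.zero_smul_isBoundedUnder_le (isBoundedUnder_of ⟨C, hF⟩)

end IntervalAverage

theorem norm_integral_exp_mul_I_le {c : ℝ} (hc : c ≠ 0) (a b : ℝ) :
    ‖∫ y in a..b, Complex.exp (c * I * y)‖ ≤ 2 / |c| := by
  have hcI : (c : ℂ) * I ≠ 0 := by simp [hc]
  have norm_exp (y : ℝ) : ‖Complex.exp (c * I * y)‖ = 1 := by simp [Complex.norm_exp]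
  calc ‖∫ y in a..b, Complex.exp (c * I * y)‖
      = ‖Complex.exp (c * I * b) - Complex.exp (c * I * a)‖ / |c| := by
        rw [integral_exp_mul_complex hcI, norm_div]
        simp
    _ ≤ (1 + 1) / |c| := by
        gcongr
        exact (norm_sub_le _ _).trans_eq (by rw [norm_exp, norm_exp])
    _ = 2 / |c| := by norm_num

theorem tendsto_intervalAverage_exp_mul_I (c : ℝ) :
    Tendsto (fun T : ℝ => ⨍ y in (-T)..T, Complex.exp (c * I * y)) atTop
      (𝓝 (if c = 0 then 1 else 0)) := by
  simp only [interval_average_eq]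
  split_ifs with hc
  · refine tendsto_const_nhds.congr' ?_
    filter_upwards [eventually_gt_atTop 0] with T hT
    have hlength : T - -T ≠ 0 := by linarith
    simp only [hc, Complex.ofReal_zero, zero_mul, Complex.exp_zero,
      intervalIntegral.integral_const, inv_smul_smul₀ hlength]
  · exact tendsto_inv_sub_neg_smul_of_norm_le fun T => norm_integral_exp_mul_I_le hc (-T) T

section VerticalStrip

variable {X : Type*} [NormedAddCommGroup X] [NormedSpace ℂ X]

theorem tendsto_intervalAverage_exp_neg_smul_of_hasSum [CompleteSpace X] {ι : Type*} [Countable ι]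
    {lam : ι → ℝ} (hlam : Function.Injective lam) {a : ι → X} {f : ℂ → X} {x : ℝ}
    (ha : Summable fun j => ‖a j‖ * Real.exp (lam j * x))
    (hf : ∀ w : ℂ, w.re = x → HasSum (fun j => Complex.exp (lam j * w) • a j) (f w)) (i : ι) :
    Tendsto (fun T : ℝ => ⨍ y in (-T)..T,
      Complex.exp (-(lam i * (x + y * I))) • f (x + y * I)) atTop (𝓝 (a i)) := by
  set b : ι → X := fun j => Complex.exp ((lam j - lam i : ℝ) * x) • a j with hb
  have norm_b (j : ι) : ‖b j‖ = Real.exp (-(lam i * x)) * (‖a j‖ * Real.exp (lam j * x)) := by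
    rw [hb, norm_smul, ← Complex.ofReal_mul, Complex.norm_exp_ofReal, sub_mul, sub_eq_neg_add,
      Real.exp_add]
    ring
  have hexp (j : ι) (y : ℝ) :
      Complex.exp (-(lam i * (x + y * I))) • Complex.exp (lam j * (x + y * I)) • a j =
        Complex.exp ((lam j - lam i : ℝ) * I * y) • b j := by
    simp only [hb, smul_smul, ← Complex.exp_add]
    congr 2
    push_cast
    ring
  have hmean (j : ι) : Tendsto (fun T : ℝ => ⨍ y in (-T)..T,
      Complex.exp ((lam j - lam i : ℝ) * I * y) • b j) atTop
      (𝓝 ((if lam j - lam i = 0 then (1 : ℂ) else 0) • b j)) := by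
    simpa only [interval_average_eq, intervalIntegral.integral_smul_const, smul_assoc] using
      (tendsto_intervalAverage_exp_mul_I (lam j - lam i)).smul_const (b j)
  have hb_summable : Summable fun j => ‖b j‖ := by
    simpa only [norm_b] using ha.mul_left (Real.exp (-(lam i * x)))
  have hsum (y : ℝ) : HasSum (fun j => Complex.exp ((lam j - lam i : ℝ) * I * y) • b j)
      (Complex.exp (-(lam i * (x + y * I))) • f (x + y * I)) := by
    simpa only [hexp] using (hf (x + y * I) (by simp)).const_smul
      (Complex.exp (-(lam i * (x + y * I))))
  have hlim := tendsto_intervalAverage_of_hasSum hb_summable (fun j => by fun_prop)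
    (fun j y => by simp [norm_smul, Complex.norm_exp]) hsum hmean
  rw [tsum_eq_single i fun j hj => by simp [sub_eq_zero, hlam.ne hj]] at hlim
  simpa [hb] using hlim

theorem norm_integral_vertical_sub_le {g : ℂ → X} {x₀ x₁ K : ℝ} (hx : x₀ < x₁)
    (hg : DiffContOnCl ℂ g (Complex.re ⁻¹' Ioo x₀ x₁))
    (hK : ∀ w : ℂ, w.re ∈ Ioo x₀ x₁ → ‖g w‖ ≤ K) (T : ℝ) :
    ‖(∫ y in (-T)..T, g (x₁ + y * I)) - ∫ y in (-T)..T, g (x₀ + y * I)‖ ≤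
      2 * (K * (x₁ - x₀)) := by
  have hclosure : closure (Complex.re ⁻¹' Ioo x₀ x₁) = Complex.re ⁻¹' Icc x₀ x₁ := by
    rw [Complex.closure_preimage_re, closure_Ioo hx.ne]
  have hrect := Complex.integral_boundary_rect_eq_zero_of_continuousOn_of_differentiableOn g
    ⟨x₀, -T⟩ ⟨x₁, T⟩
    (hg.continuousOn.mono fun w hw => by simpa [hclosure, hx.le] using hw.1)
    (hg.differentiableOn.mono fun w hw => by simpa [hx.le] using hw.1)
  have hside (t : ℝ) : ‖∫ x in x₀..x₁, g (x + t * I)‖ ≤ K * (x₁ - x₀) := by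
    rw [← abs_of_pos (sub_pos.2 hx)]
    refine intervalIntegral.norm_integral_le_of_norm_le_const fun x hx' => ?_
    refine le_on_closure (s := Complex.re ⁻¹' Ioo x₀ x₁) hK hg.continuousOn.norm
      continuousOn_const ?_
    rw [uIoc_of_le hx.le] at hx'
    simpa [hclosure] using Ioc_subset_Icc_self hx'
  set right := ∫ y in (-T)..T, g (x₁ + y * I)
  set left := ∫ y in (-T)..T, g (x₀ + y * I)
  have hsides : I • (right - left) =
      (∫ x in x₀..x₁, g (x + T * I)) - ∫ x in x₀..x₁, g (x + (-T : ℝ) * I) := by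
    rw [smul_sub, ← sub_eq_zero, ← hrect]
    abel
  calc ‖right - left‖ = ‖I • (right - left)‖ := by rw [norm_smul, Complex.norm_I, one_mul]
    _ ≤ K * (x₁ - x₀) + K * (x₁ - x₀) := by
        rw [hsides]
        exact (norm_sub_le _ _).trans (add_le_add (hside _) (hside _))
    _ = 2 * (K * (x₁ - x₀)) := by ring

theorem tendsto_intervalAverage_vertical_sub {g : ℂ → X} {x₀ x₁ K : ℝ} (hx : x₀ < x₁)
    (hg : DiffContOnCl ℂ g (Complex.re ⁻¹' Ioo x₀ x₁))
    (hK : ∀ w : ℂ, w.re ∈ Ioo x₀ x₁ → ‖g w‖ ≤ K) :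
    Tendsto (fun T : ℝ => (⨍ y in (-T)..T, g (x₁ + y * I)) - ⨍ y in (-T)..T, g (x₀ + y * I))
      atTop (𝓝 0) := by
  simp only [interval_average_eq, ← smul_sub]
  exact tendsto_inv_sub_neg_smul_of_norm_le (norm_integral_vertical_sub_le hx hg hK)

theorem norm_coeff_mul_exp_le_of_completeSpace [CompleteSpace X] {ι : Type*} [Countable ι]
    {lam : ι → ℝ} (hlam : Function.Injective lam) {a : ι → X} {f : ℂ → X} {x₀ x₁ M C : ℝ}
    (hx : x₀ < x₁) (ha : Summable fun j => ‖a j‖ * Real.exp (lam j * x₀))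
    (hf : ∀ w : ℂ, w.re = x₀ → HasSum (fun j => Complex.exp (lam j * w) • a j) (f w))
    (hd : DiffContOnCl ℂ f (Complex.re ⁻¹' Ioo x₀ x₁))
    (hM : ∀ w : ℂ, w.re ∈ Ioo x₀ x₁ → ‖f w‖ ≤ M) (hC : ∀ w : ℂ, w.re = x₁ → ‖f w‖ ≤ C) (i : ι) :
    ‖a i‖ * Real.exp (lam i * x₁) ≤ C := by
  set g : ℂ → X := fun w => Complex.exp (-(lam i * w)) • f w with hg
  have norm_g (w : ℂ) : ‖g w‖ = Real.exp (-(lam i * w.re)) * ‖f w‖ := by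
    simp [hg, norm_smul, Complex.norm_exp]
  have hgd : DiffContOnCl ℂ g (Complex.re ⁻¹' Ioo x₀ x₁) :=
    (Differentiable.diffContOnCl (by fun_prop)).smul hd
  have hgb (w : ℂ) (hw : w.re ∈ Ioo x₀ x₁) :
      ‖g w‖ ≤ Real.exp (|lam i| * max |x₀| |x₁|) * M := by
    rw [norm_g]
    gcongr
    · calc -(lam i * w.re) ≤ |lam i * w.re| := neg_le_abs _
        _ = |lam i| * |w.re| := abs_mul _ _
        _ ≤ |lam i| * max |x₀| |x₁| := by
            gcongr
            exact abs_le_max_abs_abs hw.1.le hw.2.le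
    · exact hM w hw
  have hmean : Tendsto (fun T : ℝ => ⨍ y in (-T)..T, g (x₁ + y * I)) atTop (𝓝 (a i)) := by
    have hleft : Tendsto (fun T : ℝ => ⨍ y in (-T)..T, g (x₀ + y * I)) atTop (𝓝 (a i)) :=
      tendsto_intervalAverage_exp_neg_smul_of_hasSum hlam ha hf i
    simpa only [sub_add_cancel, zero_add] using
      (tendsto_intervalAverage_vertical_sub hx hgd hgb).add hleft
  have norm_coeff_le : ‖a i‖ ≤ Real.exp (-(lam i * x₁)) * C := by
    refine le_of_tendsto hmean.norm (.of_forall fun T => ?_)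
    refine norm_intervalAverage_le_of_norm_le_const fun y _ => ?_
    have hre : ((x₁ : ℂ) + y * I).re = x₁ := by simp
    rw [norm_g, hre]
    gcongr
    exact hC _ hre
  rwa [Real.exp_neg, ← div_eq_inv_mul, le_div_iff₀ (Real.exp_pos _)] at norm_coeff_le

theorem norm_coeff_mul_exp_le {ι : Type*} [Countable ι]
    {lam : ι → ℝ} (hlam : Function.Injective lam) {a : ι → X} {f : ℂ → X} {x₀ x₁ M C : ℝ}
    (hx : x₀ < x₁) (ha : Summable fun j => ‖a j‖ * Real.exp (lam j * x₀))
    (hf : ∀ w : ℂ, w.re = x₀ → HasSum (fun j => Complex.exp (lam j * w) • a j) (f w))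
    (hd : DiffContOnCl ℂ f (Complex.re ⁻¹' Ioo x₀ x₁))
    (hM : ∀ w : ℂ, w.re ∈ Ioo x₀ x₁ → ‖f w‖ ≤ M) (hC : ∀ w : ℂ, w.re = x₁ → ‖f w‖ ≤ C) (i : ι) :
    ‖a i‖ * Real.exp (lam i * x₁) ≤ C := by
  -- The Bochner integral vanishes by convention in incomplete spaces, hence the completion.
  let toCompl : X →ₗᵢ[ℂ] UniformSpace.Completion X := UniformSpace.Completion.toComplₗᵢ
  have h := norm_coeff_mul_exp_le_of_completeSpace hlam (a := toCompl ∘ a) (f := toCompl ∘ f)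
    (M := M) (C := C) hx (by simpa using ha)
    (fun w hw => by
      simpa [Function.comp_def] using (hf w hw).mapL toCompl.toContinuousLinearMap)
    (toCompl.toContinuousLinearMap.differentiable.comp_diffContOnCl hd)
    (by simpa using hM) (by simpa using hC) i
  simpa using h

end VerticalStrip

theorem Omega_top_eq_preimage (δ : ℝ) : Omega δ ⊤ = Complex.re ⁻¹' Iio (Real.log δ) := by
  ext w
  simp [Omega]

theorem closure_Omega_top (δ : ℝ) : closure (Omega δ ⊤) = Complex.re ⁻¹' Iic (Real.log δ) := by
  rw [Omega_top_eq_preimage, Complex.closure_preimage_re, closure_Iio]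

theorem closure_Omega_top_subset {δ δ' : ℝ} (hδ : 0 < δ) (hδδ' : δ < δ') :
    closure (Omega δ ⊤) ⊆ Omega δ' ⊤ := by
  rw [closure_Omega_top, Omega_top_eq_preimage]
  exact preimage_mono (Iic_subset_Iio.2 (Real.log_lt_log hδ hδδ'))

namespace GenPowerSeries

variable {X : Type*} [NormedAddCommGroup X] {p : GenPowerSeries X}

theorem ConvergesNormally.mono {δ δ' : ℝ} (h : p.ConvergesNormally δ') (hδ : 0 ≤ δ)
    (hδδ' : δ ≤ δ') : p.ConvergesNormally δ :=
  Summable.of_nonneg_of_le (fun _ => by positivity)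
    (fun α => by gcongr; exact p.nonneg α α.2) h

variable [NormedSpace ℂ X] {f : ℂ → X} {r R M C : ℝ}

theorem IsExpansionOf.norm_coeff_mul_rpow_le (hp : p.IsExpansionOf f) (hr : 0 < r)
    (hd : DiffContOnCl ℂ f (Omega r ⊤)) (hM : ∀ w ∈ Omega r ⊤, ‖f w‖ ≤ M)
    (hC : ∀ w : ℂ, w.re = Real.log r → ‖f w‖ ≤ C) (α : p.exponents) :
    ‖p.coeff α‖ * r ^ (α : ℝ) ≤ C := by
  obtain ⟨δ₀, hδ₀, hconv, hsum⟩ := hp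
  have : Countable p.exponents := p.countable.to_subtype
  obtain ⟨x₀, hx₀⟩ := exists_lt (min (Real.log r) (Real.log δ₀))
  obtain ⟨hx₀r, hx₀δ₀⟩ := lt_min_iff.1 hx₀
  rw [Omega_top_eq_preimage] at hd hM hsum
  have hconv₀ : p.ConvergesNormally (Real.exp x₀) :=
    hconv.mono (Real.exp_pos x₀).le ((Real.lt_log_iff_exp_lt hδ₀).1 hx₀δ₀).le
  have hstrip : Complex.re ⁻¹' Ioo x₀ (Real.log r) ⊆ Complex.re ⁻¹' Iio (Real.log r) :=
    preimage_mono Ioo_subset_Iio_self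
  rw [Real.rpow_def_of_pos hr, mul_comm (Real.log r)]
  refine norm_coeff_mul_exp_le Subtype.val_injective hx₀r ?_
    (fun w hw => hsum w (hw.trans_lt hx₀δ₀)) (hd.mono hstrip) (fun w hw => hM w (hstrip hw)) hC α
  simpa only [ConvergesNormally, ← Real.exp_mul, mul_comm x₀] using hconv₀

theorem IsExpansionOf.norm_coeff_mul_rpow_le_mul_div_rpow (hp : p.IsExpansionOf f) (hr : 0 < r)
    (hR : 0 ≤ R) (hd : DiffContOnCl ℂ f (Omega r ⊤)) (hM : ∀ w ∈ Omega r ⊤, ‖f w‖ ≤ M)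
    (hC : ∀ w : ℂ, w.re = Real.log r → ‖f w‖ ≤ C) (α : p.exponents) :
    ‖p.coeff α‖ * R ^ (α : ℝ) ≤ C * (R / r) ^ (α : ℝ) :=
  calc ‖p.coeff α‖ * R ^ (α : ℝ) = ‖p.coeff α‖ * r ^ (α : ℝ) * (R / r) ^ (α : ℝ) := by
        rw [mul_assoc, ← Real.mul_rpow hr.le (by positivity), mul_div_cancel₀ _ hr.ne']
    _ ≤ C * (R / r) ^ (α : ℝ) := by
        gcongr
        exact hp.norm_coeff_mul_rpow_le hr hd hM hC α

end GenPowerSeries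

theorem cauchy_type_coefficient_estimate_general
    {X : Type*} [NormedAddCommGroup X] [NormedSpace ℂ X] {Rhat : ℝ} (hRhat : 0 < Rhat) {f : ℂ → X}
    (hd : DiffContOnCl ℂ f (Omega Rhat ⊤)) (hbdd : ∃ M : ℝ, ∀ w ∈ Omega Rhat ⊤, ‖f w‖ ≤ M)
    {p : GenPowerSeries X} (hp : p.IsExpansionOf f) {R : ℝ} (hR : 0 ≤ R) :
    (∑' α : p.exponents, ENNReal.ofReal (‖p.coeff α‖ * R ^ (α : ℝ)) ≤
      (⨆ w ∈ {w : ℂ | w.re = Real.log Rhat}, ENNReal.ofReal ‖f w‖) *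
        ∑' α : p.exponents, ENNReal.ofReal ((R / Rhat) ^ (α : ℝ))) ∧
    ((Summable fun α : p.exponents => (R / Rhat) ^ (α : ℝ)) → p.ConvergesNormally R) := by
  obtain ⟨M, hM⟩ := hbdd
  set s := ⨆ w ∈ {w : ℂ | w.re = Real.log Rhat}, ENNReal.ofReal ‖f w‖
  have hs_top : s ≠ ⊤ := ne_top_of_le_ne_top ENNReal.ofReal_ne_top <| iSup₂_le fun w hw =>
    ENNReal.ofReal_le_ofReal <| le_on_closure hM hd.continuousOn.norm continuousOn_const <| by
      rw [closure_Omega_top]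
      exact le_of_eq hw
  have hs (w : ℂ) (hw : w.re = Real.log Rhat) : ‖f w‖ ≤ s.toReal :=
    (ENNReal.ofReal_le_iff_le_toReal hs_top).1 (le_iSup₂_of_le w hw le_rfl)
  have hterm := hp.norm_coeff_mul_rpow_le_mul_div_rpow hRhat hR hd hM hs
  constructor
  · rw [← ENNReal.tsum_mul_left, ← ENNReal.ofReal_toReal hs_top]
    simp only [← ENNReal.ofReal_mul ENNReal.toReal_nonneg]
    exact ENNReal.tsum_le_tsum fun α => ENNReal.ofReal_le_ofReal (hterm α)
  · exact fun hsummable =>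
      .of_nonneg_of_le (fun α => by positivity) hterm (hsummable.mul_left _)

theorem cauchy_type_coefficient_estimate
    {X : Type*} [NormedAddCommGroup X] [NormedSpace ℂ X] [CompleteSpace X]
    (Rhat ε : ℝ) (hRhat : 0 < Rhat) (hε : 0 < ε)
    (f : ℂ → X)
    (hhol : DifferentiableOn ℂ f (Omega (Rhat + ε) ⊤))
    (hbdd : ∃ M : ℝ, ∀ w ∈ Omega (Rhat + ε) ⊤, ‖f w‖ ≤ M)
    (p : GenPowerSeries X) (hp : p.IsExpansionOf f)
    (R : ℝ) (hR : 0 < R) (hRR : R < Rhat) :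
    (∑' α : p.exponents, ENNReal.ofReal (‖p.coeff α‖ * R ^ (α : ℝ)) ≤
      (⨆ w ∈ {w : ℂ | w.re = Real.log Rhat}, ENNReal.ofReal ‖f w‖) *
        ∑' α : p.exponents, ENNReal.ofReal ((R / Rhat) ^ (α : ℝ))) ∧
    ((Summable fun α : p.exponents => (R / Rhat) ^ (α : ℝ)) → p.ConvergesNormally R) := by
  have hsub := closure_Omega_top_subset hRhat (lt_add_of_pos_right Rhat hε)
  exact cauchy_type_coefficient_estimate_general hRhat (hhol.mono hsub).diffContOnCl
    (hbdd.imp fun _ hM w hw => hM w (hsub (subset_closure hw))) hp hR.le
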